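/- Let $M$ be a simple matroid on a finite ground set $E$ with rank function $r:\mathcal P(E)\to\mathbb N$ (that is, $r(A)\le |A|$, $r$ is monotone and submodular, and every one- and two-element subset of $E$ is independent, where $A\subseteq E$ is independent if $r(A)=|A|$), and let $F$ be a field. A circuit of $M$ is a minimal dependent set. Then the following are equivalent. (i) $M$ is multilinear over $F$: there exist an integer $c\ge 1$, a finite-dimensional $F$-vector space $V$ and subspaces $\{W_e\}_{e\in E}$ of $V$ such that $\dim\bigl(\sum_{e\in S}W_e\bigr)=c\cdot r(S)$ for every $S\subseteq E$. (ii) $M$ has a vector space representation over $F$: there exist an integer $c\ge 1$, a finite-dimensional $F$-vector space $V$, $F$-vector spaces $\{W_e\}_{e\in E}$ with $\dim W_e=c$, and linear maps $T_e:V\to W_e$ such that, writing $T_A:V\to\bigoplus_{e\in A}W_e$, $v\mapsto (T_e v)_{e\in A}$, for $A\subseteq E$: (1) $T_A$ has rank $c\cdot|A|$ for every independent set $A\subseteq E$; (2) for every circuit $C$ of $M$ and every $x\in C$ there is a linear map $S:\bigoplus_{e\in C\setminus\{x\}}W_e\to W_x$ with $T_x=S\circ T_{C\setminus\{x\}}$.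 -/

import Mathlib

/-!
Both kinds of representation amount to arrangements of subspaces, and duality exchanges them. The
rank of `T_S` is the codimension of `⋂_{e∈S} ker T_e`, and `T_x` factors through `T_A` exactly when
`⋂_{e∈A} ker T_e ≤ ker T_x`, so a vector space representation is seen only through its kernels.
Passing to annihilators turns intersections into sums and codimensions into dimensions: the
annihilators `(ker T_e)^⊥ ≤ V*` form a multilinear representation, and conversely any maps
`T_e : V* → F^c` with kernels `W_e^⊥` form a vector space representation.

For the first of these one needs the rank of `T_S` also for dependent `S`. If `x` lies in a circuit
`C ⊆ S`, then removing `x` from `S` changes neither `r(S)`, by submodularity, nor the kernel of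
`T_S`, since `T_x` factors through `T_{C∖{x}}`; repeating this reduces `S` to an independent set.

Taking `F^c` rather than `W_e*` as the target of `T_e` treats loops on the same footing: for a loop
`e` one gets `W_e = 0` and `T_e = 0`.
-/

universe u v

/-- A matroid on the ground set `E`, given by its rank function. (`E` is assumed finite wherever
the structure is used.) -/
structure RankMatroid (E : Type v) [DecidableEq E] where
  /-- the rank function -/
  r : Finset E → ℕ
  r_le_card : ∀ A : Finset E, r A ≤ A.card
  r_mono : ∀ A B : Finset E, A ⊆ B → r A ≤ r B
  r_submod : ∀ A B : Finset E, r (A ∪ B) + r (A ∩ B) ≤ r A + r B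

namespace RankMatroid

/-- `A` is independent if `r(A) = |A|`. -/
def Indep {E : Type v} [DecidableEq E] (M : RankMatroid E) (A : Finset E) : Prop :=
  M.r A = A.card

/-- A circuit is a dependent set all of whose proper subsets are independent. -/
def IsCircuit {E : Type v} [DecidableEq E] (M : RankMatroid E) (C : Finset E) : Prop :=
  ¬ M.Indep C ∧ ∀ D : Finset E, D ⊂ C → M.Indep D

/-- `M` is simple if every one- and two-element subset of `E` is independent
(the case `e = f` gives the one-element subsets). -/
def IsSimple {E : Type v} [DecidableEq E] (M : RankMatroid E) : Prop :=
  ∀ e f : E, M.Indep {e, f}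

end RankMatroid

/-- The joint map `T_S : V → ⊕_{e∈S} W_e`, `v ↦ (T_e v)_{e∈S}`. -/
def jointMap {F : Type*} [Field F] {E : Type*} {V : Type*} [AddCommGroup V] [Module F V]
    {W : E → Type*} [∀ e, AddCommGroup (W e)] [∀ e, Module F (W e)]
    (T : ∀ e, V →ₗ[F] W e) (S : Finset E) : V →ₗ[F] ((e : ↥S) → W e.1) :=
  LinearMap.pi fun e => T e.1

/-- A multilinear representation of `M` over `F`: `c ≥ 1`, a finite-dimensional `F`-vector
space `V` and subspaces `W_e ≤ V` with `dim(Σ_{e∈S} W_e) = c·r(S)` for every `S`.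
Every finite-dimensional `F`-vector space is isomorphic to some `Fin n → F`, so that letting `V`
range over the universe of `F` loses nothing. -/
structure MultilinearRep (F : Type u) [Field F] {E : Type v} [DecidableEq E]
    (M : RankMatroid E) where
  c : ℕ
  one_le_c : 1 ≤ c
  V : Type u
  [addCommGroupV : AddCommGroup V]
  [moduleV : Module F V]
  [finiteDimensionalV : FiniteDimensional F V]
  W : E → Submodule F V
  finrank_sum : ∀ S : Finset E, Module.finrank F ↥(⨆ e ∈ S, W e) = c * M.r S

/-- A vector space representation of `M` over `F`: `c ≥ 1`, a finite-dimensional `F`-vector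
space `V`, spaces `W_e` with `dim W_e = c`, and linear maps `T_e : V → W_e` such that the joint
map `T_A` has rank `c·|A|` for every independent `A`, and, for every circuit `C` and `x ∈ C`,
`T_x = S ∘ T_{C∖{x}}` for some linear map `S`. As in `MultilinearRep`, the spaces range over the
universe of `F`. -/
structure VectorSpaceRep (F : Type u) [Field F] {E : Type v} [DecidableEq E]
    (M : RankMatroid E) where
  c : ℕ
  one_le_c : 1 ≤ c
  V : Type u
  [addCommGroupV : AddCommGroup V]
  [moduleV : Module F V]
  [finiteDimensionalV : FiniteDimensional F V]
  W : E → Type u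
  [addCommGroupW : ∀ e, AddCommGroup (W e)]
  [moduleW : ∀ e, Module F (W e)]
  [finiteDimensionalW : ∀ e, FiniteDimensional F (W e)]
  finrank_W : ∀ e, Module.finrank F (W e) = c
  T : ∀ e, V →ₗ[F] W e
  independent : ∀ A : Finset E, M.Indep A →
    Module.finrank F ↥(LinearMap.range (jointMap T A)) = c * A.card
  determined : ∀ C : Finset E, M.IsCircuit C → ∀ x ∈ C,
    ∃ S : ((e : ↥(C.erase x)) → W e.1) →ₗ[F] W x, T x = S ∘ₗ jointMap T (C.erase x)

/-- `M` is multilinear over `F`. -/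
def IsMultilinear (F : Type u) [Field F] {E : Type v} [DecidableEq E]
    (M : RankMatroid E) : Prop :=
  Nonempty (MultilinearRep F M)

/-- `M` has a vector space representation over `F`. -/
def HasVectorSpaceRep (F : Type u) [Field F] {E : Type v} [DecidableEq E]
    (M : RankMatroid E) : Prop :=
  Nonempty (VectorSpaceRep F M)

section LinearAlgebra

lemma exists_eq_comp_iff_ker_le {R U V W : Type*} [Ring R] [AddCommGroup U] [Module R U]
    [AddCommGroup V] [Module R V] [AddCommGroup W] [Module R W] [IsSemisimpleModule R U]
    {f : V →ₗ[R] U} {g : V →ₗ[R] W} :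
    (∃ L : U →ₗ[R] W, g = L ∘ₗ f) ↔ LinearMap.ker f ≤ LinearMap.ker g := by
  refine ⟨fun ⟨L, hL⟩ => hL ▸ LinearMap.ker_le_ker_comp f L, fun h => ?_⟩
  have f_injective : Function.Injective ((LinearMap.ker f).liftQ f le_rfl) :=
    LinearMap.ker_eq_bot.mp ((LinearMap.ker f).ker_liftQ_eq_bot f le_rfl le_rfl)
  obtain ⟨L, hL⟩ :=
    IsSemisimpleModule.extension_property _ f_injective ((LinearMap.ker f).liftQ g h)
  exact ⟨L, LinearMap.ext fun v => (LinearMap.congr_fun hL (Submodule.Quotient.mk v)).symm⟩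

lemma exists_linearMap_ker_eq {R V W : Type*} [Ring R] [StrongRankCondition R] [AddCommGroup V]
    [Module R V] [AddCommGroup W] [Module R W] [Module.Free R W] [Module.Finite R W]
    (K : Submodule R V) [Module.Free R (V ⧸ K)] [Module.Finite R (V ⧸ K)]
    (h : Module.finrank R (V ⧸ K) ≤ Module.finrank R W) :
    ∃ T : V →ₗ[R] W, LinearMap.ker T = K := by
  obtain ⟨i, hi⟩ := finrank_le_iff_exists_linearMap.mp h
  refine ⟨i ∘ₗ K.mkQ, ?_⟩
  rw [LinearMap.ker_comp_of_ker_eq_bot _ (LinearMap.ker_eq_bot.mpr hi), K.ker_mkQ]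

variable {F V : Type*} [Field F] [AddCommGroup V] [Module F V]

lemma finrank_quotient_dualAnnihilator (W : Submodule F V) :
    Module.finrank F (Module.Dual F V ⧸ W.dualAnnihilator) = Module.finrank F W :=
  (Subspace.quotAnnihilatorEquiv W).finrank_eq.trans Subspace.dual_finrank_eq

lemma finrank_biSup_dualAnnihilator [FiniteDimensional F V] {E : Type*} (K : E → Submodule F V)
    (S : Finset E) :
    Module.finrank F ↥(⨆ e ∈ S, (K e).dualAnnihilator) = Module.finrank F (V ⧸ ⨅ e ∈ S, K e) := by
  rw [iSup_subtype', iInf_subtype', ← Subspace.dualAnnihilator_iInf_eq fun e : S => K e]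
  exact (Subspace.quotEquivAnnihilator _).finrank_eq.symm

end LinearAlgebra

section JointMap

variable {F E V : Type*} [Field F] [AddCommGroup V] [Module F V] {W : E → Type*}
  [∀ e, AddCommGroup (W e)] [∀ e, Module F (W e)] (T : ∀ e, V →ₗ[F] W e) (S : Finset E)

lemma ker_jointMap : LinearMap.ker (jointMap T S) = ⨅ e ∈ S, LinearMap.ker (T e) := by
  rw [jointMap, LinearMap.ker_pi, iInf_subtype']

lemma finrank_range_jointMap :
    Module.finrank F (LinearMap.range (jointMap T S)) =
      Module.finrank F (V ⧸ ⨅ e ∈ S, LinearMap.ker (T e)) := by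
  rw [← ker_jointMap, (jointMap T S).quotKerEquivRange.finrank_eq]

lemma exists_eq_comp_jointMap_iff {x : E} :
    (∃ L : ((e : S) → W e.1) →ₗ[F] W x, T x = L ∘ₗ jointMap T S) ↔
      ⨅ e ∈ S, LinearMap.ker (T e) ≤ LinearMap.ker (T x) := by
  rw [exists_eq_comp_iff_ker_le, ker_jointMap]

end JointMap

namespace RankMatroid

variable {E : Type*} [DecidableEq E] {M : RankMatroid E}

lemma isCircuit_iff_minimal {C : Finset E} : M.IsCircuit C ↔ Minimal (¬ M.Indep ·) C := by
  simp only [IsCircuit, minimal_iff_forall_lt, not_not]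

lemma exists_isCircuit_subset {S : Finset E} (hS : ¬ M.Indep S) : ∃ C ⊆ S, M.IsCircuit C := by
  simpa only [isCircuit_iff_minimal] using
    exists_minimal_le_of_wellFoundedLT (¬ M.Indep ·) S hS

namespace IsCircuit

variable {C S : Finset E} {x : E}

lemma nonempty (hC : M.IsCircuit C) : C.Nonempty := by
  rw [Finset.nonempty_iff_ne_empty]
  rintro rfl
  exact hC.1 (Nat.le_zero.mp (M.r_le_card ∅))

lemma r_erase (hC : M.IsCircuit C) (hx : x ∈ C) : M.r (C.erase x) = M.r C := by
  have r_lt_card : M.r C < C.card := (M.r_le_card C).lt_of_ne hC.1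
  have r_erase_eq : M.r (C.erase x) = (C.erase x).card := hC.2 _ (Finset.erase_ssubset hx)
  have r_mono := M.r_mono _ _ (C.erase_subset x)
  have card_erase := Finset.card_erase_add_one hx
  lia

lemma r_erase_of_subset (hC : M.IsCircuit C) (hCS : C ⊆ S) (hx : x ∈ C) :
    M.r (S.erase x) = M.r S := by
  have r_submod := M.r_submod (S.erase x) C
  have union_eq : S.erase x ∪ C = S := by grind
  have inter_eq : S.erase x ∩ C = C.erase x := by grind
  rw [union_eq, inter_eq, hC.r_erase hx] at r_submod
  exact (M.r_mono _ _ (S.erase_subset x)).antisymm (by lia)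

end IsCircuit

end RankMatroid

attribute [instance] MultilinearRep.addCommGroupV MultilinearRep.moduleV
  MultilinearRep.finiteDimensionalV VectorSpaceRep.addCommGroupV VectorSpaceRep.moduleV
  VectorSpaceRep.finiteDimensionalV VectorSpaceRep.addCommGroupW VectorSpaceRep.moduleW

section Representations

variable {F : Type u} [Field F] {E : Type v} [DecidableEq E] {M : RankMatroid E}
  {C S : Finset E} {x : E}

namespace MultilinearRep

lemma finrank_W_le (R : MultilinearRep F M) (e : E) : Module.finrank F (R.W e) ≤ R.c := by
  have finrank_W : Module.finrank F (R.W e) = R.c * M.r {e} := by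
    rw [← R.finrank_sum, Finset.iSup_singleton]
  exact finrank_W.trans_le (mul_le_of_le_one_right' (M.r_le_card {e}))

lemma le_biSup_erase (R : MultilinearRep F M) (hC : M.IsCircuit C) (hx : x ∈ C) :
    R.W x ≤ ⨆ e ∈ C.erase x, R.W e := by
  have biSup_erase : ⨆ e ∈ C.erase x, R.W e = ⨆ e ∈ C, R.W e :=
    Submodule.eq_of_le_of_finrank_eq (biSup_mono fun _ => Finset.mem_of_mem_erase)
      (by rw [R.finrank_sum, R.finrank_sum, hC.r_erase hx])
  exact biSup_erase ▸ le_biSup R.W hx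

end MultilinearRep

theorem IsMultilinear.hasVectorSpaceRep (h : IsMultilinear F M) : HasVectorSpaceRep F M := by
  obtain ⟨R⟩ := h
  have exists_T (e : E) : ∃ T : Module.Dual F R.V →ₗ[F] (Fin R.c → F),
      LinearMap.ker T = (R.W e).dualAnnihilator :=
    exists_linearMap_ker_eq _ <| by
      simpa only [finrank_quotient_dualAnnihilator, Module.finrank_fin_fun] using R.finrank_W_le e
  choose T ker_T using exists_T
  have biInf_ker (S : Finset E) :
      ⨅ e ∈ S, LinearMap.ker (T e) = (⨆ e ∈ S, R.W e).dualAnnihilator := by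
    simp only [ker_T, Submodule.dualAnnihilator_iSup_eq]
  exact ⟨{
    c := R.c
    one_le_c := R.one_le_c
    V := Module.Dual F R.V
    W := fun _ => Fin R.c → F
    finrank_W := fun _ => Module.finrank_fin_fun F
    T := T
    independent := fun A hA => (finrank_range_jointMap T A).trans <| by
      rw [biInf_ker, finrank_quotient_dualAnnihilator, R.finrank_sum, show M.r A = A.card from hA]
    determined := fun C hC x hx => (exists_eq_comp_jointMap_iff T _).mpr <| by
      rw [biInf_ker, ker_T]
      exact Submodule.dualAnnihilator_anti (R.le_biSup_erase hC hx) }⟩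

namespace VectorSpaceRep

lemma biInf_ker_erase (R : VectorSpaceRep F M) (hC : M.IsCircuit C) (hCS : C ⊆ S) (hx : x ∈ C) :
    ⨅ e ∈ S.erase x, LinearMap.ker (R.T e) = ⨅ e ∈ S, LinearMap.ker (R.T e) := by
  have biInf_le_ker : ⨅ e ∈ S.erase x, LinearMap.ker (R.T e) ≤ LinearMap.ker (R.T x) :=
    (biInf_mono (Finset.erase_subset_erase x hCS)).trans <|
      (exists_eq_comp_jointMap_iff R.T _).mp (R.determined C hC x hx)
  rw [← Finset.insert_erase (hCS hx), Finset.iInf_insert,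
    Finset.erase_insert (Finset.notMem_erase x S), inf_eq_right.mpr biInf_le_ker]

lemma finrank_quotient_biInf_ker (R : VectorSpaceRep F M) (S : Finset E) :
    Module.finrank F (R.V ⧸ ⨅ e ∈ S, LinearMap.ker (R.T e)) = R.c * M.r S := by
  induction S using Finset.strongInduction with
  | H S ih =>
    by_cases hS : M.Indep S
    · rw [← finrank_range_jointMap, R.independent S hS, show M.r S = S.card from hS]
    · obtain ⟨C, hCS, hC⟩ := RankMatroid.exists_isCircuit_subset hS
      obtain ⟨x, hx⟩ := hC.nonempty
      rw [← R.biInf_ker_erase hC hCS hx, ← hC.r_erase_of_subset hCS hx]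
      exact ih _ (Finset.erase_ssubset (hCS hx))

end VectorSpaceRep

theorem HasVectorSpaceRep.isMultilinear (h : HasVectorSpaceRep F M) : IsMultilinear F M := by
  obtain ⟨R⟩ := h
  exact ⟨{
    c := R.c
    one_le_c := R.one_le_c
    V := Module.Dual F R.V
    W := fun e => (LinearMap.ker (R.T e)).dualAnnihilator
    finrank_sum := fun S => by
      rw [finrank_biSup_dualAnnihilator, R.finrank_quotient_biInf_ker] }⟩

end Representations

theorem statement13_general {E : Type v} [DecidableEq E] (F : Type u) [Field F]
    (M : RankMatroid E) : IsMultilinear F M ↔ HasVectorSpaceRep F M :=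
  ⟨IsMultilinear.hasVectorSpaceRep, HasVectorSpaceRep.isMultilinear⟩

/-- A simple matroid on a finite ground set is multilinear over a field `F` if and only if it has
a vector space representation over `F`. -/
theorem statement13 {E : Type v} [Fintype E] [DecidableEq E] (F : Type u) [Field F]
    (M : RankMatroid E) (hM : M.IsSimple) :
    IsMultilinear F M ↔ HasVectorSpaceRep F M :=
  statement13_general F M
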